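/- Let ν = π/8 and define K : ℝ → ℝ by K(x) = (1/4)·[ e^{−|x|·cos ν}·cos(|x|·sin ν − ν) + e^{−|x|·sin ν}·sin(|x|·cos ν + ν) ]. Then for every integer n ≥ 1 and every x ≠ 0, the n-th derivative of K exists at x and equals K^{(n)}(x) = ((−sgn x)^n / 4)·[ e^{−|x|·cos ν}·cos(|x|·sin ν − (n+1)ν) + e^{−|x|·sin ν}·sin(|x|·cos ν + (n+1)ν − nπ/2) ]. In particular, K^{(8)}(x) + K(x) = 0 for every x ≠ 0. -/

import Mathlib

/-!
On each half-line `x > 0` and `x < 0` the kernel is `t ↦ kerBranch 0 (s * t)` with the constant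
`s = sign x`, where `kerBranch n` is the bracket in the formula for `K⁽ⁿ⁾`, divided by `4` and with
`|x|` replaced by a free variable. Each of the two terms of `kerBranch n` is the real part of an
exponential `c * exp (-λ t)` with `|λ| = 1`, so differentiating it only changes its sign and
rotates its phase: `(kerBranch n)' = -kerBranch (n + 1)` (`hasDerivAt_kerBranch`). Iterating this
gives the formula, since `Kker` agrees with its branch near every `x ≠ 0`. After eight steps both
phases have moved by an odd multiple of `π`, which gives `K⁽⁸⁾ = -K`.
-/

/-- The decaying fundamental solution of `d⁸/dx⁸ + 1` in closed form,
with `ν = π/8`. -/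
noncomputable def Kker (x : ℝ) : ℝ :=
  (1 / 4) *
    (Real.exp (-|x| * Real.cos (Real.pi / 8)) *
        Real.cos (|x| * Real.sin (Real.pi / 8) - Real.pi / 8)
      + Real.exp (-|x| * Real.sin (Real.pi / 8)) *
        Real.sin (|x| * Real.cos (Real.pi / 8) + Real.pi / 8))

/-- The smooth function on `ℝ` whose value at `|x|` is `(-sgn x)ⁿ K⁽ⁿ⁾(x)` for `x ≠ 0`. -/
noncomputable def kerBranch (n : ℕ) (t : ℝ) : ℝ :=
  (1 / 4) *
    (Real.exp (-t * Real.cos (Real.pi / 8)) *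
        Real.cos (t * Real.sin (Real.pi / 8) - ((n : ℝ) + 1) * (Real.pi / 8))
      + Real.exp (-t * Real.sin (Real.pi / 8)) *
        Real.sin (t * Real.cos (Real.pi / 8)
          + ((n : ℝ) + 1) * (Real.pi / 8) - (n : ℝ) * Real.pi / 2))

theorem hasDerivAt_kerBranch (n : ℕ) (t : ℝ) :
    HasDerivAt (kerBranch n) (-kerBranch (n + 1) t) t := by
  have he (c : ℝ) : HasDerivAt (fun t : ℝ => Real.exp (-t * c))
      (Real.exp (-t * c) * (-1 * c)) t := (((hasDerivAt_id t).neg).mul_const c).exp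
  have hc := ((((hasDerivAt_id t).mul_const (Real.sin (Real.pi / 8))).sub_const
    (((n : ℝ) + 1) * (Real.pi / 8)))).cos
  have hs := (((((hasDerivAt_id t).mul_const (Real.cos (Real.pi / 8))).add_const
    (((n : ℝ) + 1) * (Real.pi / 8))).sub_const ((n : ℝ) * Real.pi / 2))).sin
  refine ((((he (Real.cos (Real.pi / 8))).mul hc).add
    ((he (Real.sin (Real.pi / 8))).mul hs)).const_mul (1 / 4)).congr_deriv ?_
  have h1 : t * Real.sin (Real.pi / 8) - (((n + 1 : ℕ) : ℝ) + 1) * (Real.pi / 8)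
      = (t * Real.sin (Real.pi / 8) - ((n : ℝ) + 1) * (Real.pi / 8)) - Real.pi / 8 := by
    push_cast; ring
  have h2 : t * Real.cos (Real.pi / 8) + (((n + 1 : ℕ) : ℝ) + 1) * (Real.pi / 8)
        - ((n + 1 : ℕ) : ℝ) * Real.pi / 2
      = (t * Real.cos (Real.pi / 8) + ((n : ℝ) + 1) * (Real.pi / 8) - (n : ℝ) * Real.pi / 2)
        + Real.pi / 8 - Real.pi / 2 := by
    push_cast; ring
  simp only [kerBranch, h1, h2, Real.sin_sub_pi_div_two, id]
  rw [Real.cos_sub _ (Real.pi / 8), Real.cos_add _ (Real.pi / 8)]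
  ring

theorem iteratedDeriv_kerBranch_mul (s : ℝ) (n : ℕ) :
    iteratedDeriv n (fun x => kerBranch 0 (s * x)) = fun x => (-s) ^ n * kerBranch n (s * x) := by
  induction n with
  | zero => simp
  | succ n ih =>
    rw [iteratedDeriv_succ, ih]
    funext x
    have h := ((hasDerivAt_kerBranch n (s * x)).comp x
      ((hasDerivAt_id x).const_mul s)).const_mul ((-s) ^ n)
    refine h.deriv.trans ?_
    ring

theorem Kker_eventuallyEq_kerBranch {x : ℝ} (hx : x ≠ 0) :
    Kker =ᶠ[nhds x] fun y => kerBranch 0 (Real.sign x * y) := by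
  have habs : ∀ᶠ y in nhds x, |y| = Real.sign x * y := by
    rcases hx.lt_or_gt with h | h
    · filter_upwards [eventually_lt_nhds h] with y hy
      rw [Real.sign_of_neg h, abs_of_neg hy]; ring
    · filter_upwards [eventually_gt_nhds h] with y hy
      rw [Real.sign_of_pos h, abs_of_pos hy]; ring
  filter_upwards [habs] with y hy
  simp [Kker, kerBranch, hy]

theorem iteratedDeriv_Kker (n : ℕ) {x : ℝ} (hx : x ≠ 0) :
    iteratedDeriv n Kker x = (-Real.sign x) ^ n * kerBranch n |x| := by
  have habs : Real.sign x * x = |x| := by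
    rcases hx.lt_or_gt with h | h
    · rw [Real.sign_of_neg h, abs_of_neg h]; ring
    · rw [Real.sign_of_pos h, abs_of_pos h]; ring
  rw [(Kker_eventuallyEq_kerBranch hx).iteratedDeriv_eq n, iteratedDeriv_kerBranch_mul]
  simp only [habs]

theorem contDiffAt_Kker {m : WithTop ℕ∞} {x : ℝ} (hx : x ≠ 0) : ContDiffAt ℝ m Kker x := by
  refine ContDiffAt.congr_of_eventuallyEq ?_ (Kker_eventuallyEq_kerBranch hx)
  unfold kerBranch
  fun_prop

theorem kerBranch_eight (t : ℝ) : kerBranch 8 t = -kerBranch 0 t := by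
  have h1 : t * Real.sin (Real.pi / 8) - (((8 : ℕ) : ℝ) + 1) * (Real.pi / 8)
      = (t * Real.sin (Real.pi / 8) - Real.pi / 8) - Real.pi := by push_cast; ring
  have h2 : t * Real.cos (Real.pi / 8) + (((8 : ℕ) : ℝ) + 1) * (Real.pi / 8)
        - ((8 : ℕ) : ℝ) * Real.pi / 2
      = (t * Real.cos (Real.pi / 8) + Real.pi / 8) + Real.pi - (2 : ℕ) * (2 * Real.pi) := by
    push_cast; ring
  simp only [kerBranch, h1, h2, Real.cos_sub_pi, Real.sin_sub_nat_mul_two_pi, Real.sin_add_pi]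
  simp only [Nat.cast_zero, zero_add, one_mul, zero_mul, zero_div, sub_zero]
  ring

/-- Derivatives of the kernel `K`: for every `n ≥ 1` and `x ≠ 0`, the `n`-th
derivative of `K` exists at `x` and equals
`((−sgn x)ⁿ/4)[e^{−|x|cos ν} cos(|x| sin ν − (n+1)ν)
  + e^{−|x| sin ν} sin(|x| cos ν + (n+1)ν − nπ/2)]` with `ν = π/8`;
in particular `K⁽⁸⁾(x) + K(x) = 0` for `x ≠ 0`. -/
theorem stmt14 :
    (∀ n : ℕ, 1 ≤ n → ∀ x : ℝ, x ≠ 0 →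
      ContDiffAt ℝ (n : ℕ∞) Kker x ∧
      iteratedDeriv n Kker x =
        ((-Real.sign x) ^ n / 4) *
          (Real.exp (-|x| * Real.cos (Real.pi / 8)) *
              Real.cos (|x| * Real.sin (Real.pi / 8) - ((n : ℝ) + 1) * (Real.pi / 8))
            + Real.exp (-|x| * Real.sin (Real.pi / 8)) *
              Real.sin (|x| * Real.cos (Real.pi / 8)
                + ((n : ℝ) + 1) * (Real.pi / 8) - (n : ℝ) * Real.pi / 2))) ∧
    (∀ x : ℝ, x ≠ 0 → iteratedDeriv 8 Kker x + Kker x = 0) := by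
  refine ⟨fun n _ x hx => ⟨contDiffAt_Kker hx, ?_⟩, fun x hx => ?_⟩
  · rw [iteratedDeriv_Kker n hx, kerBranch]
    ring
  · have hK : Kker x = kerBranch 0 |x| := by simp [Kker, kerBranch]
    have hsign : (-Real.sign x) ^ 8 = 1 := by
      rcases Real.sign_apply_eq_of_ne_zero x hx with h | h <;> rw [h] <;> norm_num
    rw [iteratedDeriv_Kker 8 hx, hK, kerBranch_eight, hsign]
    ring
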